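/- For every τ in the complex upper half plane, E_{2,2}(τ)² − E_{2,4}(τ) = 128·η(2τ)¹⁶/η(τ)⁸ and E_{2,2}(τ)² + E_{2,4}(τ) = 2·η(τ)¹⁶/η(2τ)⁸. -/

import Mathlib

open Complex

/-- `q = exp(2πiτ)`. -/
noncomputable def qq (τ : ℂ) : ℂ := Complex.exp (2 * Real.pi * Complex.I * τ)

/-- `σ_k(n) = Σ_{d ∣ n} d^k`, as a complex number. -/
noncomputable def sigmaC (k n : ℕ) : ℂ := ∑ d ∈ n.divisors, (d : ℂ) ^ k

/-- Eisenstein series `E₂(τ) = 1 - 24 Σ_{n≥1} σ₁(n) qⁿ`. -/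
noncomputable def E₂ (τ : ℂ) : ℂ := 1 - 24 * ∑' n : ℕ, sigmaC 1 (n + 1) * qq τ ^ (n + 1)

/-- Eisenstein series `E₄(τ) = 1 + 240 Σ_{n≥1} σ₃(n) qⁿ`. -/
noncomputable def E₄ (τ : ℂ) : ℂ := 1 + 240 * ∑' n : ℕ, sigmaC 3 (n + 1) * qq τ ^ (n + 1)

/-- Eisenstein series `E₆(τ) = 1 - 504 Σ_{n≥1} σ₅(n) qⁿ`. -/
noncomputable def E₆ (τ : ℂ) : ℂ := 1 - 504 * ∑' n : ℕ, sigmaC 5 (n + 1) * qq τ ^ (n + 1)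

/-- Dedekind eta function `η(τ) = exp(πiτ/12) ∏_{n≥1} (1 - qⁿ)`. -/
noncomputable def η (τ : ℂ) : ℂ :=
  Complex.exp (Real.pi * Complex.I * τ / 12) * ∏' n : ℕ, (1 - qq τ ^ (n + 1))

/-- Theta function `θ(τ) = Σ_{n ∈ ℤ} q^{n²}`. -/
noncomputable def θ (τ : ℂ) : ℂ := ∑' n : ℤ, qq τ ^ (n ^ 2)

/-- The character `χ₋₄`: `χ₋₄(d) = 1, -1, 0` according as `d ≡ 1, 3, 0/2 (mod 4)`. -/
noncomputable def χ₄ (d : ℕ) : ℂ := if d % 4 = 1 then 1 else if d % 4 = 3 then -1 else 0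

/-- The character `χ₋₃`: `χ₋₃(d) = 1, -1, 0` according as `d ≡ 1, 2, 0 (mod 3)`. -/
noncomputable def χ₃ (d : ℕ) : ℂ := if d % 3 = 1 then 1 else if d % 3 = 2 then -1 else 0

/-- `E_{1,-4}(τ) = 1/4 + Σ_{n≥1} (Σ_{d∣n} χ₋₄(d)) qⁿ`. -/
noncomputable def E₁₄ (τ : ℂ) : ℂ :=
  1 / 4 + ∑' n : ℕ, (∑ d ∈ (n + 1).divisors, χ₄ d) * qq τ ^ (n + 1)

/-- `E_{1,-3}(τ) = 1/6 + Σ_{n≥1} (Σ_{d∣n} χ₋₃(d)) qⁿ`. -/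
noncomputable def E₁₃ (τ : ℂ) : ℂ :=
  1 / 6 + ∑' n : ℕ, (∑ d ∈ (n + 1).divisors, χ₃ d) * qq τ ^ (n + 1)

/-- `E_{2,2}(τ) = 2E₂(2τ) - E₂(τ)`. -/
noncomputable def E₂₂ (τ : ℂ) : ℂ := 2 * E₂ (2 * τ) - E₂ τ

/-- `E_{2,4}(τ) = (4E₄(2τ) - E₄(τ))/3`. -/
noncomputable def E₂₄ (τ : ℂ) : ℂ := (4 * E₄ (2 * τ) - E₄ τ) / 3

/-- `E_{3,2}(τ) = (3E₂(3τ) - E₂(τ))/2`. -/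
noncomputable def E₃₂ (τ : ℂ) : ℂ := (3 * E₂ (3 * τ) - E₂ τ) / 2

/-- `E_{3,4}(τ) = (9E₄(3τ) - E₄(τ))/8`. -/
noncomputable def E₃₄ (τ : ℂ) : ℂ := (9 * E₄ (3 * τ) - E₄ τ) / 8

/-- `E_{4,2}(τ) = (4E₂(4τ) - E₂(τ))/3`. -/
noncomputable def E₄₂ (τ : ℂ) : ℂ := (4 * E₂ (4 * τ) - E₂ τ) / 3

/-- `E'_{4,2}(τ) = 4E₂(4τ) - 4E₂(2τ) + E₂(τ)`. -/
noncomputable def E₄₂' (τ : ℂ) : ℂ := 4 * E₂ (4 * τ) - 4 * E₂ (2 * τ) + E₂ τ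

/-- `f_{1,j}(τ) = 2E₂(τ) - ((3+(-1)ʲi√3)/6)E₂(τ/2) - ((3-(-1)ʲi√3)/6)E₂((τ+1)/2)`. -/
noncomputable def f₁ (j : ℕ) (τ : ℂ) : ℂ :=
  2 * E₂ τ - ((3 + (-1 : ℂ) ^ j * Complex.I * Real.sqrt 3) / 6) * E₂ (τ / 2)
    - ((3 - (-1 : ℂ) ^ j * Complex.I * Real.sqrt 3) / 6) * E₂ ((τ + 1) / 2)

/-- `g_{1,j}(τ) = (3/2)E₂(τ) - (1/4) Σ_{0≤m≤2, m≢j (mod 3)} E₂((τ+m)/3)`. -/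
noncomputable def g₁ (j : ℕ) (τ : ℂ) : ℂ :=
  (3 / 2) * E₂ τ -
    (1 / 4) * ∑ m ∈ (Finset.range 3).filter (fun m => ¬ m % 3 = j % 3), E₂ ((τ + m) / 3)

/-- `f_{2,j}(τ) = 4E_{1,-4}(τ) + (-1)ʲ·2i·(E_{1,-4}(τ/2) - E_{1,-4}((τ+1)/2))`. -/
noncomputable def f₂ (j : ℕ) (τ : ℂ) : ℂ :=
  4 * E₁₄ τ + (-1 : ℂ) ^ j * 2 * Complex.I * (E₁₄ (τ / 2) - E₁₄ ((τ + 1) / 2))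

/-- `f_{3,j}(τ) = 6E_{1,-3}(2τ) + (-1)ʲ·i√3·(E_{1,-3}(τ/2) - E_{1,-3}((τ+1)/2))`. -/
noncomputable def f₃ (j : ℕ) (τ : ℂ) : ℂ :=
  6 * E₁₃ (2 * τ) +
    (-1 : ℂ) ^ j * Complex.I * Real.sqrt 3 * (E₁₃ (τ / 2) - E₁₃ ((τ + 1) / 2))

/-- `f_{4,j}(τ) = θ(τ/2 - (-1)ʲ/4)`. -/
noncomputable def f₄ (j : ℕ) (τ : ℂ) : ℂ := θ (τ / 2 - (-1 : ℂ) ^ j / 4)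

/-- `g_{4,j}(τ) = 2θ(2τ)² - θ((τ+j)/2)²`. -/
noncomputable def g₄ (j : ℕ) (τ : ℂ) : ℂ := 2 * θ (2 * τ) ^ 2 - θ ((τ + j) / 2) ^ 2

/-- `E_{3,-3,1}(τ) = -1/9 + Σ_{n≥1} (Σ_{d∣n} d²χ₋₃(d)) qⁿ`. -/
noncomputable def E₃₃₁ (τ : ℂ) : ℂ :=
  -(1 / 9) + ∑' n : ℕ, (∑ d ∈ (n + 1).divisors, (d : ℂ) ^ 2 * χ₃ d) * qq τ ^ (n + 1)

/-- `E_{3,1,-3}(τ) = Σ_{n≥1} (Σ_{d∣n} d²χ₋₃(n/d)) qⁿ`. -/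
noncomputable def E₃₁₃ (τ : ℂ) : ℂ :=
  ∑' n : ℕ, (∑ d ∈ (n + 1).divisors, (d : ℂ) ^ 2 * χ₃ ((n + 1) / d)) * qq τ ^ (n + 1)

open UpperHalfPlane hiding I
open Filter Topology
open scoped MatrixGroups Modular

/-! ### Weight zero functions of level two -/

open scoped ModularForm in
/-- A holomorphic function on the upper half plane which is invariant under `z ↦ z + 1` and
`z ↦ -1 / z`, and tends to zero at `i∞`, vanishes. -/
theorem eq_zero_of_levelOne_invariant {F : ℂ → ℂ}
    (hF : DifferentiableOn ℂ F upperHalfPlaneSet)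
    (hT : ∀ z : ℂ, 0 < z.im → F (z + 1) = F z) (hS : ∀ z : ℂ, 0 < z.im → F (-1 / z) = F z)
    (hlim : Tendsto (fun z : ℍ ↦ F z) atImInfty (𝓝 0)) (z : ℂ) (hz : 0 < z.im) : F z = 0 := by
  have hS' : (fun z : ℍ ↦ F z) ∣[(0 : ℤ)] ModularGroup.S = fun z : ℍ ↦ F z := by
    ext w
    rw [ModularForm.SL_slash_apply, UpperHalfPlane.modular_S_smul]
    have := hS w w.2
    simpa [neg_div] using this
  have hT' : (fun z : ℍ ↦ F z) ∣[(0 : ℤ)] ModularGroup.T = fun z : ℍ ↦ F z := by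
    ext w
    rw [ModularForm.SL_slash_apply, UpperHalfPlane.modular_T_smul]
    have := hT w w.2
    simpa [add_comm] using this
  let M : ModularForm 𝒮ℒ 0 :=
    { toFun := fun z : ℍ ↦ F z
      slash_action_eq' := by
        rintro A ⟨A, rfl⟩
        exact SlashInvariantForm.slash_action_generators_SL2Z hS' hT' A
      holo' := by
        rw [UpperHalfPlane.mdifferentiable_iff]
        refine hF.congr fun z hz ↦ ?_
        simp [ofComplex_apply_of_im_pos hz]
      bdd_at_cusps' := by
        intro c hc
        rw [Subgroup.IsArithmetic.isCusp_iff_isCusp_SL2Z] at hc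
        rw [OnePoint.isBoundedAt_iff_forall_SL2Z hc]
        intro γ _
        rw [SlashInvariantForm.slash_action_generators_SL2Z hS' hT']
        exact hlim.isBigO_one ℝ }
  obtain ⟨c, hc⟩ := ModularFormClass.levelOne_weight_zero_const M
  have hval (w : ℍ) : F w = c := congrFun hc w
  have hc0 : c = 0 := by
    refine tendsto_nhds_unique (f := fun _ : ℍ ↦ c) (l := atImInfty) tendsto_const_nhds ?_
    simpa [hval] using hlim
  simpa [hc0] using hval ⟨z, hz⟩

/-- If `f` is invariant under `z ↦ z + 1`, its transform `g` under `z ↦ -1 / z` is invariant under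
`z ↦ z + 2`, and both are holomorphic and tend to zero at `i∞`, then `f` and `g` vanish. -/
theorem eq_zero_of_levelTwo_invariant {f g : ℂ → ℂ}
    (hf : DifferentiableOn ℂ f upperHalfPlaneSet) (hg : DifferentiableOn ℂ g upperHalfPlaneSet)
    (hfT : ∀ z : ℂ, f (z + 1) = f z) (hgT : ∀ z : ℂ, g (z + 2) = g z)
    (hfS : ∀ z : ℂ, 0 < z.im → f (-1 / z) = g z)
    (hflim : Tendsto (fun z : ℍ ↦ f z) atImInfty (𝓝 0))
    (hglim : Tendsto (fun z : ℍ ↦ g z) atImInfty (𝓝 0))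
    (hglim' : Tendsto (fun z : ℍ ↦ g (z + 1)) atImInfty (𝓝 0)) :
    (∀ z : ℂ, 0 < z.im → f z = 0) ∧ ∀ z : ℂ, 0 < z.im → g z = 0 := by
  have im_inv {z : ℂ} (hz : 0 < z.im) : 0 < (-1 / z).im := by
    simpa [neg_div] using UpperHalfPlane.im_inv_neg_coe_pos ⟨z, hz⟩
  have hgS (z : ℂ) (hz : 0 < z.im) : g (-1 / z) = f z := by
    have hz0 : z ≠ 0 := fun h ↦ by simp [h] at hz
    rw [← hfS _ (im_inv hz)]
    congr 1
    field_simp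
  have hgT' (z : ℂ) : g (z + 1) = g (z - 1) := by
    rw [← hgT (z - 1)]
    congr 1
    ring
  have hgS' (z : ℂ) (hz : 0 < z.im) : g (-1 / z + 1) = g (z + 1) := by
    have hz0 : z ≠ 0 := fun h ↦ by simp [h] at hz
    have hz1 : z - 1 ≠ 0 := fun h ↦ by simp [sub_eq_zero.mp h] at hz
    have him : 0 < (-1 / z + 1).im := by simpa using im_inv hz
    have him' : 0 < (z - 1).im := by simpa using hz
    rw [← hfS _ him, hgT', ← hfS _ him', ← hfT]
    congr 1
    have : -1 / z + 1 = (z - 1) / z := by field_simp; ring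
    rw [this]
    field_simp
    ring
  have hg' : DifferentiableOn ℂ (fun z ↦ g (z + 1)) upperHalfPlaneSet :=
    hg.comp (by fun_prop) fun z hz ↦ by simpa using hz
  have hprod : ∀ z ∈ upperHalfPlaneSet, f z * (g z * g (z + 1)) = 0 := by
    refine eq_zero_of_levelOne_invariant (F := fun z ↦ f z * (g z * g (z + 1)))
      (hf.mul (hg.mul hg')) (fun z _ ↦ ?_) (fun z hz ↦ ?_) ?_
    · have : g (z + 1 + 1) = g z := by rw [add_assoc, one_add_one_eq_two, hgT]
      rw [hfT, this, mul_comm (g (z + 1))]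
    · rw [hfS z hz, hgS z hz, hgS' z hz]
      ring
    · simpa using hflim.mul (hglim.mul hglim')
  have hconn : IsPreconnected upperHalfPlaneSet := (convex_halfSpace_im_gt 0).isPreconnected
  have han {h : ℂ → ℂ} (hh : DifferentiableOn ℂ h upperHalfPlaneSet) :
      AnalyticOnNhd ℂ h upperHalfPlaneSet := hh.analyticOnNhd isOpen_upperHalfPlaneSet
  have hg0 : ∀ z : ℂ, 0 < z.im → g z = 0 := by
    rcases (han hf).eq_zero_or_eq_zero_of_mul_eq_zero (han (hg.mul hg')) hprod hconn with h | h
    · intro z hz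
      rw [← hfS z hz]
      exact h _ (im_inv hz)
    rcases (han hg).eq_zero_or_eq_zero_of_mul_eq_zero (han hg') h hconn with h | h
    · exact h
    · intro z hz
      have := h (z - 1) (by simpa [upperHalfPlaneSet] using hz)
      simpa using this
  exact ⟨fun z hz ↦ hgS z hz ▸ hg0 _ (im_inv hz), hg0⟩

/-! ### Expansions in `q` -/

/-- The series `∑ σ_k(n + 1) qⁿ`. -/
noncomputable def sigmaSeries (k : ℕ) (q : ℂ) : ℂ := ∑' n : ℕ, sigmaC k (n + 1) * q ^ n

/-- The Euler product `∏ (1 - qⁿ)` over `n ≥ 1`. -/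
noncomputable def eulerProduct (q : ℂ) : ℂ := ∏' n : ℕ, (1 - q ^ (n + 1))

theorem sigmaC_eq_sigma (k n : ℕ) : sigmaC k n = (ArithmeticFunction.sigma k n : ℂ) := by
  simp [sigmaC, ArithmeticFunction.sigma_apply]

theorem norm_sigmaC_le (k n : ℕ) : ‖sigmaC k n‖ ≤ (n : ℝ) ^ (k + 1) := by
  rw [sigmaC_eq_sigma, Complex.norm_natCast]
  exact_mod_cast ArithmeticFunction.sigma_le_pow_succ k n

theorem differentiableOn_sigmaSeries (k : ℕ) :
    DifferentiableOn ℂ (sigmaSeries k) (Metric.ball 0 1) := by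
  intro q hq
  obtain ⟨r, hqr, hr⟩ := exists_between (mem_ball_zero_iff.mp hq)
  have hr0 : 0 < r := (norm_nonneg q).trans_lt hqr
  have hsum : Summable fun n : ℕ ↦ ((n + 1 : ℕ) : ℝ) ^ (k + 1) * r ^ n := by
    have h := summable_pow_mul_geometric_of_norm_lt_one (k + 1) (r := r)
      (by rwa [Real.norm_of_nonneg hr0.le])
    refine (((summable_nat_add_iff 1).mpr h).mul_left r⁻¹).congr fun n ↦ ?_
    rw [pow_succ r]
    field_simp
  have hd : DifferentiableOn ℂ (sigmaSeries k) (Metric.ball 0 r) := by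
    refine differentiableOn_tsum_of_summable_norm hsum (fun n ↦ by fun_prop) Metric.isOpen_ball ?_
    intro n w hw
    rw [norm_mul, norm_pow]
    have := (mem_ball_zero_iff.mp hw).le
    gcongr
    exact norm_sigmaC_le k (n + 1)
  have hmem : Metric.ball 0 r ∈ 𝓝 q := Metric.isOpen_ball.mem_nhds (by simpa using hqr)
  exact (hd.differentiableAt hmem).differentiableWithinAt

theorem sigmaSeries_zero (k : ℕ) : sigmaSeries k 0 = 1 := by
  rw [sigmaSeries, tsum_eq_single 0 fun n hn ↦ by simp [hn]]
  simp [sigmaC]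

theorem tsum_sigmaC_mul_pow_succ (k : ℕ) (q : ℂ) :
    ∑' n : ℕ, sigmaC k (n + 1) * q ^ (n + 1) = q * sigmaSeries k q := by
  rw [sigmaSeries, ← tsum_mul_left]
  exact tsum_congr fun n ↦ by ring

theorem eulerProduct_zero : eulerProduct 0 = 1 := by
  simp [eulerProduct]

theorem differentiableOn_eulerProduct :
    DifferentiableOn ℂ eulerProduct (Metric.ball 0 1) :=
  ModularForm.differentiableOn_tprod_one_sub_pow

theorem eulerProduct_ne_zero {q : ℂ} (hq : ‖q‖ < 1) : eulerProduct q ≠ 0 := by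
  have := tprod_one_add_ne_zero_of_summable (f := fun n : ℕ ↦ -q ^ (n + 1)) (fun n h ↦ ?_) ?_
  · simpa [eulerProduct, sub_eq_add_neg] using this
  · have h1 : q ^ (n + 1) = 1 := by linear_combination -h
    have h2 := pow_lt_one₀ (norm_nonneg q) hq n.succ_ne_zero
    rw [← norm_pow, Nat.succ_eq_add_one, h1] at h2
    simp at h2
  · simpa using (summable_nat_add_iff 1).mpr (summable_geometric_of_lt_one (norm_nonneg q) hq)

theorem qq_two_mul (τ : ℂ) : qq (2 * τ) = qq τ ^ 2 := by
  rw [qq, qq, ← Complex.exp_nat_mul]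
  congr 1
  push_cast
  ring

theorem qq_add_one (τ : ℂ) : qq (τ + 1) = qq τ := by
  rw [qq, qq, mul_add, mul_one, Complex.exp_add, Complex.exp_two_pi_mul_I, mul_one]

theorem norm_qq_lt_one {τ : ℂ} (hτ : 0 < τ.im) : ‖qq τ‖ < 1 :=
  norm_exp_two_pi_I_lt_one ⟨τ, hτ⟩

/-- `(E_{2,2} - 1) / q` as a function of `q`. -/
noncomputable def E₂₂Tail (q : ℂ) : ℂ := 24 * sigmaSeries 1 q - 48 * q * sigmaSeries 1 (q ^ 2)

/-- `(E_{2,4} - 1) / q` as a function of `q`. -/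
noncomputable def E₂₄Tail (q : ℂ) : ℂ := 320 * q * sigmaSeries 3 (q ^ 2) - 80 * sigmaSeries 3 q

theorem E₂₂_eq (τ : ℂ) : E₂₂ τ = 1 + qq τ * E₂₂Tail (qq τ) := by
  simp only [E₂₂, E₂, tsum_sigmaC_mul_pow_succ, qq_two_mul, E₂₂Tail]
  ring

theorem E₂₄_eq (τ : ℂ) : E₂₄ τ = 1 + qq τ * E₂₄Tail (qq τ) := by
  simp only [E₂₄, E₄, tsum_sigmaC_mul_pow_succ, qq_two_mul, E₂₄Tail]
  ring

/-- `(E_{2,2}² - E_{2,4}) η(τ)⁸ / η(2τ)¹⁶` as a function of `q`. -/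
noncomputable def quotMinus (q : ℂ) : ℂ :=
  (2 * E₂₂Tail q + q * E₂₂Tail q ^ 2 - E₂₄Tail q) * eulerProduct q ^ 8 / eulerProduct (q ^ 2) ^ 16

/-- `64 (E_{2,2}² + E_{2,4}) η(2τ)⁸ / η(τ)¹⁶` as a function of `q`. -/
noncomputable def quotPlus (q : ℂ) : ℂ :=
  64 * ((1 + q * E₂₂Tail q) ^ 2 + (1 + q * E₂₄Tail q)) * eulerProduct (q ^ 2) ^ 8 /
    eulerProduct q ^ 16

theorem quotMinus_zero : quotMinus 0 = 128 := by
  simp [quotMinus, E₂₂Tail, E₂₄Tail, sigmaSeries_zero, eulerProduct_zero]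
  norm_num

theorem quotPlus_zero : quotPlus 0 = 128 := by
  simp [quotPlus, eulerProduct_zero]
  norm_num

theorem mapsTo_sq_ball : Set.MapsTo (fun q : ℂ ↦ q ^ 2) (Metric.ball 0 1) (Metric.ball 0 1) := by
  intro q hq
  rw [mem_ball_zero_iff] at hq ⊢
  rw [norm_pow]
  exact pow_lt_one₀ (norm_nonneg q) hq two_ne_zero

theorem DifferentiableOn.comp_sq_ball {f : ℂ → ℂ} (hf : DifferentiableOn ℂ f (Metric.ball 0 1)) :
    DifferentiableOn ℂ (fun q ↦ f (q ^ 2)) (Metric.ball 0 1) :=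
  hf.comp (by fun_prop) mapsTo_sq_ball

theorem differentiableOn_E₂₂Tail : DifferentiableOn ℂ E₂₂Tail (Metric.ball 0 1) := by
  have h := differentiableOn_sigmaSeries 1
  have h' := h.comp_sq_ball
  unfold E₂₂Tail
  fun_prop

theorem differentiableOn_E₂₄Tail : DifferentiableOn ℂ E₂₄Tail (Metric.ball 0 1) := by
  have h := differentiableOn_sigmaSeries 3
  have h' := h.comp_sq_ball
  unfold E₂₄Tail
  fun_prop

theorem differentiableOn_quotMinus : DifferentiableOn ℂ quotMinus (Metric.ball 0 1) := by
  have h₂ := differentiableOn_E₂₂Tail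
  have h₄ := differentiableOn_E₂₄Tail
  have hp := differentiableOn_eulerProduct
  refine DifferentiableOn.div (by fun_prop) (hp.comp_sq_ball.pow 16) fun q hq ↦ pow_ne_zero _ ?_
  exact eulerProduct_ne_zero (mem_ball_zero_iff.mp (mapsTo_sq_ball hq))

theorem differentiableOn_quotPlus : DifferentiableOn ℂ quotPlus (Metric.ball 0 1) := by
  have h₂ := differentiableOn_E₂₂Tail
  have h₄ := differentiableOn_E₂₄Tail
  have hp := differentiableOn_eulerProduct
  have hp' := hp.comp_sq_ball
  refine DifferentiableOn.div (by fun_prop) (hp.pow 16) fun q hq ↦ pow_ne_zero _ ?_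
  exact eulerProduct_ne_zero (mem_ball_zero_iff.mp hq)

theorem η_eq (τ : ℂ) : η τ = Complex.exp (Real.pi * I * τ / 12) * eulerProduct (qq τ) := rfl

theorem η_ne_zero {τ : ℂ} (hτ : 0 < τ.im) : η τ ≠ 0 :=
  mul_ne_zero (Complex.exp_ne_zero _) (eulerProduct_ne_zero (norm_qq_lt_one hτ))

theorem quotMinus_qq {τ : ℂ} (hτ : 0 < τ.im) :
    quotMinus (qq τ) = (E₂₂ τ ^ 2 - E₂₄ τ) * η τ ^ 8 / η (2 * τ) ^ 16 := by
  have h2τ : 0 < (2 * τ).im := by simpa using hτ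
  have hp : eulerProduct (qq τ ^ 2) ≠ 0 := qq_two_mul τ ▸ eulerProduct_ne_zero (norm_qq_lt_one h2τ)
  have hexp : Complex.exp (Real.pi * I * (2 * τ) / 12) ^ 16 =
      qq τ * Complex.exp (Real.pi * I * τ / 12) ^ 8 := by
    rw [qq, ← Complex.exp_nat_mul, ← Complex.exp_nat_mul, ← Complex.exp_add]
    congr 1
    push_cast
    ring
  have hq : qq τ ≠ 0 := Complex.exp_ne_zero _
  have he := Complex.exp_ne_zero (Real.pi * I * τ / 12)
  rw [η_eq, η_eq, mul_pow, mul_pow, hexp, qq_two_mul, E₂₂_eq, E₂₄_eq, quotMinus]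
  field_simp
  ring

theorem quotPlus_qq {τ : ℂ} (hτ : 0 < τ.im) :
    quotPlus (qq τ) = 64 * (E₂₂ τ ^ 2 + E₂₄ τ) * η (2 * τ) ^ 8 / η τ ^ 16 := by
  have hp : eulerProduct (qq τ) ≠ 0 := eulerProduct_ne_zero (norm_qq_lt_one hτ)
  have hexp : Complex.exp (Real.pi * I * (2 * τ) / 12) ^ 8 =
      Complex.exp (Real.pi * I * τ / 12) ^ 16 := by
    rw [← Complex.exp_nat_mul, ← Complex.exp_nat_mul]
    congr 1
    push_cast
    ring
  have he := Complex.exp_ne_zero (Real.pi * I * τ / 12)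
  rw [η_eq, η_eq, mul_pow, mul_pow, hexp, qq_two_mul, E₂₂_eq, E₂₄_eq, quotPlus]
  field_simp

/-! ### Transformation under `τ ↦ -1 / τ` -/

theorem tsum_pnat_sigma_eq (k : ℕ) (τ : ℂ) :
    ∑' n : ℕ+, (ArithmeticFunction.sigma k n : ℂ) * Complex.exp (2 * Real.pi * I * τ) ^ (n : ℕ) =
      ∑' n : ℕ, sigmaC k (n + 1) * qq τ ^ (n + 1) := by
  rw [tsum_pnat_eq_tsum_succ (f := fun n : ℕ ↦
    (ArithmeticFunction.sigma k n : ℂ) * Complex.exp (2 * Real.pi * I * τ) ^ n)]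
  simp [sigmaC_eq_sigma, qq]

theorem E₂_coe (z : ℍ) : E₂ z = EisensteinSeries.E2 z := by
  rw [EisensteinSeries.E2_eq_tsum_cexp, tsum_pnat_sigma_eq, E₂]

theorem E₄_coe (z : ℍ) : E₄ z = ModularForm.E₄ z := by
  have h := EisensteinSeries.q_expansion_bernoulli (k := 4) (by norm_num) (by decide) z
  have hb : bernoulli 4 = -1 / 30 := by
    rw [bernoulli_eq_bernoulli'_of_ne_one (by norm_num), bernoulli'_four]
  rw [h, E₄, ← tsum_pnat_sigma_eq]
  simp only [hb, zpow_natCast]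
  norm_num

theorem E₂_neg_one_div {τ : ℂ} (hτ : 0 < τ.im) :
    E₂ (-1 / τ) = τ ^ 2 * E₂ τ + 6 / (Real.pi * I) * τ := by
  have hτ0 : τ ≠ 0 := fun h ↦ by simp [h] at hτ
  have h := congrFun (EisensteinSeries.E2_slash_action ModularGroup.S) ⟨τ, hτ⟩
  rw [ModularForm.SL_slash_apply, UpperHalfPlane.modular_S_smul, ModularGroup.denom_S,
    Pi.sub_apply, Pi.smul_apply, EisensteinSeries.D2_S, ← E₂_coe, ← E₂_coe, riemannZeta_two] at h
  have hpi : (Real.pi : ℂ) ≠ 0 := by exact_mod_cast Real.pi_ne_zero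
  have e : -1 / τ = (-τ)⁻¹ := by field_simp
  rw [zpow_neg, mul_inv_eq_iff_eq_mul₀ (by simpa using hτ0)] at h
  simp only [smul_eq_mul] at h
  rw [e, h]
  field_simp
  ring_nf
  simp
  ring

open scoped ModularForm in
theorem E₄_neg_one_div {τ : ℂ} (hτ : 0 < τ.im) : E₄ (-1 / τ) = τ ^ 4 * E₄ τ := by
  have hτ0 : τ ≠ 0 := fun h ↦ by simp [h] at hτ
  have h : (⇑ModularForm.E₄ ∣[(4 : ℤ)] ModularGroup.S) ⟨τ, hτ⟩ = ModularForm.E₄ ⟨τ, hτ⟩ :=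
    congrFun (ModularForm.E₄.slash_action_eq' _ ⟨ModularGroup.S, rfl⟩) ⟨τ, hτ⟩
  rw [ModularForm.SL_slash_apply, UpperHalfPlane.modular_S_smul, ModularGroup.denom_S, ← E₄_coe,
    ← E₄_coe, zpow_neg, mul_inv_eq_iff_eq_mul₀ (by simpa using hτ0)] at h
  have e : -1 / τ = (-τ)⁻¹ := by field_simp
  rw [e, mul_comm]
  exact_mod_cast h

theorem η_coe (τ : ℂ) : η τ = ModularForm.eta τ := by
  simp only [η, ModularForm.eta, ModularForm.eta_q_eq_pow, qq, Function.Periodic.qParam]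
  congr 2
  push_cast
  ring

theorem η_neg_one_div_pow_eight {τ : ℂ} (hτ : 0 < τ.im) : η (-1 / τ) ^ 8 = τ ^ 4 * η τ ^ 8 := by
  have hτ0 : τ ≠ 0 := fun h ↦ by simp [h] at hτ
  have hsqrt {z : ℂ} (hz : z ≠ 0) : Complex.sqrt z ^ 8 = z ^ 4 := by
    rw [sqrt_eq_exp hz, ← Complex.exp_nat_mul,
      show ((8 : ℕ) : ℂ) * (log z / 2) = (4 : ℕ) * log z by push_cast; ring, Complex.exp_nat_mul,
      Complex.exp_log hz]
  have h : ModularForm.eta (-1 / τ) =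
      (Complex.sqrt I)⁻¹ * (Complex.sqrt τ * ModularForm.eta τ) := by
    simpa using ModularForm.eta_comp_eq_csqrt_I_inv (show τ ∈ upperHalfPlaneSet from hτ)
  rw [η_coe, η_coe, h, mul_pow, mul_pow, inv_pow, hsqrt I_ne_zero, hsqrt hτ0, I_pow_four]
  ring

theorem quotMinus_qq_neg_one_div {τ : ℂ} (hτ : 0 < τ.im) :
    quotMinus (qq (-1 / τ)) = quotPlus (qq (τ / 2)) := by
  have hτ0 : τ ≠ 0 := fun h ↦ by simp [h] at hτ
  have hτ2 : 0 < (τ / 2).im := by simpa using hτ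
  have him : 0 < (-1 / τ).im := by
    simpa [neg_div] using UpperHalfPlane.im_inv_neg_coe_pos ⟨τ, hτ⟩
  have hdbl : 2 * (-1 / τ) = -1 / (τ / 2) := by field_simp
  have hη : η (-1 / (τ / 2)) ^ 16 = (τ / 2) ^ 8 * η (τ / 2) ^ 16 := by
    linear_combination (η (-1 / (τ / 2)) ^ 8 + (τ / 2) ^ 4 * η (τ / 2) ^ 8) *
      η_neg_one_div_pow_eight hτ2
  have hη0 := η_ne_zero hτ2
  rw [quotMinus_qq him, quotPlus_qq hτ2, E₂₂, E₂₂, E₂₄, E₂₄, hdbl, hη, η_neg_one_div_pow_eight hτ,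
    E₂_neg_one_div hτ, E₂_neg_one_div hτ2, E₄_neg_one_div hτ, E₄_neg_one_div hτ2,
    show 2 * (τ / 2) = τ by ring]
  field_simp
  ring

theorem tendsto_qq_atImInfty {c : ℝ} (hc : 0 < c) (b : ℝ) :
    Tendsto (fun z : ℍ ↦ qq ((z + b) / c)) atImInfty (𝓝 0) := by
  have h := (UpperHalfPlane.qParam_tendsto_atImInfty hc).mul_const (qq (b / c))
  rw [zero_mul] at h
  refine h.congr fun z ↦ ?_
  rw [Function.Periodic.qParam, qq, qq, ← Complex.exp_add]
  congr 1
  ring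

theorem quotMinus_quotPlus_eq :
    (∀ τ : ℂ, 0 < τ.im → quotMinus (qq τ) = 128) ∧ ∀ τ : ℂ, 0 < τ.im → quotPlus (qq τ) = 128 := by
  have hball : Metric.ball (0 : ℂ) 1 ∈ 𝓝 0 := Metric.ball_mem_nhds 0 one_pos
  have hm : Tendsto (fun q ↦ quotMinus q - 128) (𝓝 0) (𝓝 0) := by
    have := (differentiableOn_quotMinus.differentiableAt hball).continuousAt.tendsto.sub_const 128
    rwa [quotMinus_zero, sub_self] at this
  have hp : Tendsto (fun q ↦ quotPlus q - 128) (𝓝 0) (𝓝 0) := by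
    have := (differentiableOn_quotPlus.differentiableAt hball).continuousAt.tendsto.sub_const 128
    rwa [quotPlus_zero, sub_self] at this
  have hqq : Differentiable ℂ qq := by unfold qq; fun_prop
  obtain ⟨h₁, h₂⟩ := eq_zero_of_levelTwo_invariant (f := fun τ ↦ quotMinus (qq τ) - 128)
    (g := fun τ ↦ quotPlus (qq (τ / 2)) - 128)
    ((differentiableOn_quotMinus.comp hqq.differentiableOn fun τ hτ ↦
      mem_ball_zero_iff.mpr (norm_qq_lt_one hτ)).sub_const 128)
    ((differentiableOn_quotPlus.comp (f := fun τ ↦ qq (τ / 2)) (by fun_prop) fun τ hτ ↦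
      mem_ball_zero_iff.mpr (norm_qq_lt_one (by simpa using! hτ))).sub_const 128)
    (fun τ ↦ by rw [qq_add_one])
    (fun τ ↦ by rw [show (τ + 2) / 2 = τ / 2 + 1 by ring, qq_add_one])
    (fun τ hτ ↦ by rw [quotMinus_qq_neg_one_div hτ])
    (hm.comp (by simpa using tendsto_qq_atImInfty one_pos 0))
    (hp.comp (by simpa using tendsto_qq_atImInfty two_pos 0))
    (hp.comp (by simpa using tendsto_qq_atImInfty two_pos 1))
  refine ⟨fun τ hτ ↦ sub_eq_zero.mp (h₁ τ hτ), fun τ hτ ↦ ?_⟩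
  have := sub_eq_zero.mp (h₂ (2 * τ) (by simpa using hτ))
  rwa [mul_div_cancel_left₀ τ two_ne_zero] at this

theorem stmt6 (τ : ℂ) (hτ : 0 < τ.im) :
    E₂₂ τ ^ 2 - E₂₄ τ = 128 * η (2 * τ) ^ 16 / η τ ^ 8 ∧
    E₂₂ τ ^ 2 + E₂₄ τ = 2 * η τ ^ 16 / η (2 * τ) ^ 8 := by
  have hη := η_ne_zero hτ
  have hη' : η (2 * τ) ≠ 0 := η_ne_zero (by simpa using hτ)
  have h₁ := quotMinus_quotPlus_eq.1 τ hτ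
  have h₂ := quotMinus_quotPlus_eq.2 τ hτ
  rw [quotMinus_qq hτ, div_eq_iff (pow_ne_zero _ hη')] at h₁
  rw [quotPlus_qq hτ, div_eq_iff (pow_ne_zero _ hη)] at h₂
  rw [eq_div_iff (pow_ne_zero _ hη), eq_div_iff (pow_ne_zero _ hη')]
  exact ⟨h₁, by linear_combination h₂ / 64⟩
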